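/- Let p ∈ (0,1), let F be a Lévy measure on ℝⁿ satisfying (A_F), let b ∈ ℝⁿ, let c be a symmetric positive semidefinite n×n matrix, and let C ⊆ ℝⁿ be a compact convex set with 0 ∈ C. Define Φ(π) := ⟨π,b⟩ + ((p−1)/2)⟨π,cπ⟩ + ∫ ( p⁻¹((1+⟨π,u⟩)₊)^p − p⁻¹ − ⟨π,u⟩·1_{|u|≤1} ) F(du) for π ∈ C₀. Then: (a) there exists π* ∈ C ∩ C₀ with Φ(π*) ≥ Φ(π) for all π ∈ C ∩ C₀; (b) any two maximizers of Φ over C ∩ C₀ differ by an element of N: if π₁, π₂ ∈ C ∩ C₀ both maximize Φ over C ∩ C₀, then π₁ − π₂ ∈ N. -/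

import Mathlib

open MeasureTheory
open scoped RealInnerProductSpace ENNReal

/-- The objective function `Φ(π) := ⟨π,b⟩ + ((p−1)/2)⟨π,cπ⟩ +
`∫ (p⁻¹((1+⟨π,u⟩)₊)^p − p⁻¹ − ⟨π,u⟩·1_{|u|≤1}) dF`. -/
noncomputable def PhiObj (n : ℕ) (p : ℝ) (F : Measure (EuclideanSpace ℝ (Fin n)))
    (b : EuclideanSpace ℝ (Fin n))
    (c : EuclideanSpace ℝ (Fin n) →ₗ[ℝ] EuclideanSpace ℝ (Fin n))
    (π : EuclideanSpace ℝ (Fin n)) : ℝ :=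
  ⟪π, b⟫ + ((p - 1) / 2) * ⟪π, c π⟫ +
    ∫ u, (p⁻¹ * (max (1 + ⟪π, u⟫) 0) ^ p - p⁻¹ -
      Set.indicator {u : EuclideanSpace ℝ (Fin n) | ‖u‖ ≤ 1}
        (fun u => ⟪π, u⟫) u) ∂F

lemma aux_small (p x : ℝ) (hp0 : 0 < p) (hp1 : p < 1) :
    |p⁻¹ * (max (1 + x) 0) ^ p - p⁻¹ - x| ≤ 4 / p * x ^ 2 := by
  have hpi : 1 < p⁻¹ := (one_lt_inv₀ hp0).2 hp1
  have h4 : 4 / p = 4 * p⁻¹ := div_eq_mul_inv _ _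
  rw [h4]
  rcases le_or_gt (-(1/2)) x with hx | hx
  · have hy : 0 < 1 + x := by linarith
    rw [max_eq_left hy.le]
    have hup : (1 + x) ^ p ≤ 1 + p * x :=
      rpow_one_add_le_one_add_mul_self (by linarith) hp0.le hp1.le
    have hlo : 1 + p * Real.log (1 + x) ≤ (1 + x) ^ p := by
      rw [Real.rpow_def_of_pos hy]
      have := Real.add_one_le_exp (Real.log (1 + x) * p)
      linarith
    have hlog := Real.one_sub_inv_le_log_of_pos hy
    have hA : p⁻¹ * (1 + x) ^ p - p⁻¹ - x ≤ 0 := by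
      have := mul_le_mul_of_nonneg_left hup (by positivity : 0 ≤ p⁻¹)
      have e : p⁻¹ * (1 + p * x) = p⁻¹ + x := by field_simp
      linarith
    have hB : Real.log (1 + x) - x ≤ p⁻¹ * (1 + x) ^ p - p⁻¹ - x := by
      have := mul_le_mul_of_nonneg_left hlo (by positivity : 0 ≤ p⁻¹)
      have e : p⁻¹ * (1 + p * Real.log (1 + x)) = p⁻¹ + Real.log (1 + x) := by field_simp
      linarith
    have hC : -(2 * x ^ 2) ≤ 1 - (1 + x)⁻¹ - x := by
      have e : 1 - (1 + x)⁻¹ - x = - (x ^ 2 * (1 + x)⁻¹) := by field_simp; ring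
      have : (1 + x)⁻¹ ≤ 2 := by
        rw [inv_le_comm₀ hy (by norm_num)]; linarith
      rw [e]
      nlinarith [sq_nonneg x]
    rw [abs_of_nonpos hA]
    nlinarith [sq_nonneg x]
  · have h0 : 0 ≤ max (1 + x) 0 := le_max_right _ _
    have h1 : max (1 + x) 0 ≤ 1 := max_le (by linarith) (by norm_num)
    have h2 := Real.rpow_le_one h0 h1 hp0.le
    have h3 : 0 ≤ (max (1 + x) 0) ^ p := Real.rpow_nonneg h0 p
    have hx2 : 1 ≤ 4 * x ^ 2 := by nlinarith
    have hx3 : -x ≤ 2 * x ^ 2 := by nlinarith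
    have k1 : p⁻¹ * (max (1 + x) 0) ^ p ≤ p⁻¹ := by nlinarith
    have k2 : 0 ≤ p⁻¹ * (max (1 + x) 0) ^ p := by positivity
    rw [abs_le]
    constructor <;> nlinarith

lemma aux_large (p x : ℝ) (hp0 : 0 < p) (hp1 : p < 1) :
    |p⁻¹ * (max (1 + x) 0) ^ p - p⁻¹| ≤ p⁻¹ * |x| ^ p := by
  have e : p⁻¹ * (max (1 + x) 0) ^ p - p⁻¹ = p⁻¹ * ((max (1 + x) 0) ^ p - 1) := by ring
  rw [e, abs_mul, abs_of_pos (by positivity : 0 < p⁻¹)]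
  apply mul_le_mul_of_nonneg_left _ (by positivity)
  have hy0 : 0 ≤ max (1 + x) 0 := le_max_right _ _
  have h1 : (max (1 + x) 0) ^ p ≤ 1 + |x| ^ p := by
    calc (max (1 + x) 0) ^ p ≤ (1 + |x|) ^ p := by
          apply Real.rpow_le_rpow hy0 _ hp0.le
          apply max_le
          · linarith [le_abs_self x]
          · positivity
      _ ≤ 1 ^ p + |x| ^ p := Real.rpow_add_le_add_rpow zero_le_one (abs_nonneg x) hp0.le hp1.le
      _ = _ := by rw [Real.one_rpow]
  have h2 : 1 ≤ (max (1 + x) 0) ^ p + |x| ^ p := by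
    calc (1:ℝ) = 1 ^ p := (Real.one_rpow p).symm
      _ ≤ (max (1 + x) 0 + |x|) ^ p := by
          apply Real.rpow_le_rpow zero_le_one _ hp0.le
          linarith [le_max_left (1 + x) 0, neg_abs_le x]
      _ ≤ _ := Real.rpow_add_le_add_rpow hy0 (abs_nonneg x) hp0.le hp1.le
  rw [abs_le]
  constructor <;> linarith

/-- The integrand. -/
noncomputable def JJ (n : ℕ) (p : ℝ) (π u : EuclideanSpace ℝ (Fin n)) : ℝ :=
  p⁻¹ * (max (1 + ⟪π, u⟫) 0) ^ p - p⁻¹ -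
      Set.indicator {u : EuclideanSpace ℝ (Fin n) | ‖u‖ ≤ 1} (fun u => ⟪π, u⟫) u

/-- The dominating function. -/
noncomputable def BB (n : ℕ) (p M : ℝ) (u : EuclideanSpace ℝ (Fin n)) : ℝ :=
  4 / p * M ^ 2 * min (‖u‖ ^ 2) 1 +
    p⁻¹ * M ^ p * Set.indicator {u : EuclideanSpace ℝ (Fin n) | 1 < ‖u‖} (fun u => ‖u‖ ^ p) u

lemma JJ_bound (n : ℕ) (p M : ℝ) (hp0 : 0 < p) (hp1 : p < 1) (hM : 0 ≤ M)
    (π u : EuclideanSpace ℝ (Fin n)) (hπ : ‖π‖ ≤ M) : ‖JJ n p π u‖ ≤ BB n p M u := by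
  have hx : |⟪π, u⟫| ≤ M * ‖u‖ := (abs_real_inner_le_norm π u).trans (by gcongr)
  unfold JJ BB
  rw [Real.norm_eq_abs]
  rcases le_or_gt ‖u‖ 1 with h | h
  · rw [Set.indicator_of_mem (by exact h), Set.indicator_of_notMem (by simpa using h)]
    refine (aux_small p _ hp0 hp1).trans ?_
    have h1 : ‖u‖ ^ 2 ≤ 1 := pow_le_one₀ (norm_nonneg _) h
    rw [min_eq_left h1, mul_zero, add_zero, mul_assoc, ← mul_pow]
    apply mul_le_mul_of_nonneg_left _ (by positivity)
    rw [← sq_abs]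
    gcongr
  · rw [Set.indicator_of_notMem (by simpa using h), Set.indicator_of_mem (by exact h), sub_zero]
    refine (aux_large p _ hp0 hp1).trans ?_
    have : |⟪π, u⟫| ^ p ≤ M ^ p * ‖u‖ ^ p := by
      rw [← Real.mul_rpow hM (norm_nonneg _)]
      gcongr
    have h3 : 0 ≤ 4 / p * M ^ 2 * min (‖u‖ ^ 2) 1 := by positivity
    have := mul_le_mul_of_nonneg_left this (by positivity : 0 ≤ p⁻¹)
    rw [mul_assoc p⁻¹]
    linarith

lemma JJ_meas (n : ℕ) (p : ℝ) (hp0 : 0 < p) (π : EuclideanSpace ℝ (Fin n)) :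
    Measurable (JJ n p π) := by
  unfold JJ
  have hs : MeasurableSet {u : EuclideanSpace ℝ (Fin n) | ‖u‖ ≤ 1} :=
    measurableSet_le measurable_norm measurable_const
  have hi : Measurable (fun u : EuclideanSpace ℝ (Fin n) => ⟪π, u⟫) :=
    (continuous_const.inner continuous_id).measurable
  have h1 := hi.indicator hs
  have h2 : Measurable (fun u : EuclideanSpace ℝ (Fin n) => (max (1 + ⟪π, u⟫) 0) ^ p) :=
    ((measurable_const.add hi).max measurable_const).pow_const p
  exact ((h2.const_mul _).sub_const _).sub h1

lemma BB_int (n : ℕ) (p M : ℝ) (F : Measure (EuclideanSpace ℝ (Fin n)))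
    (hFlevy : ∫⁻ u, ENNReal.ofReal (min (‖u‖ ^ (2 : ℕ)) 1) ∂F ≠ ⊤)
    (hAF : ∫⁻ u in {u : EuclideanSpace ℝ (Fin n) | 1 < ‖u‖}, ENNReal.ofReal (‖u‖ ^ p) ∂F ≠ ⊤) :
    Integrable (BB n p M) F := by
  unfold BB
  have hs : MeasurableSet {u : EuclideanSpace ℝ (Fin n) | 1 < ‖u‖} :=
    measurableSet_lt measurable_const measurable_norm
  refine Integrable.add (Integrable.const_mul ?_ _) (Integrable.const_mul ?_ _)
  · refine (lintegral_ofReal_ne_top_iff_integrable ?_ ?_).1 hFlevy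
    · exact ((measurable_norm.pow_const 2).min measurable_const).aestronglyMeasurable
    · exact Filter.Eventually.of_forall fun u => by dsimp; positivity
  · rw [integrable_indicator_iff hs]
    refine (lintegral_ofReal_ne_top_iff_integrable ?_ ?_).1 hAF
    · exact (measurable_norm.pow_const p).aestronglyMeasurable
    · exact Filter.Eventually.of_forall fun u => by dsimp; positivity

lemma JJ_int (n : ℕ) (p : ℝ) (hp0 : 0 < p) (hp1 : p < 1)
    (F : Measure (EuclideanSpace ℝ (Fin n)))
    (hFlevy : ∫⁻ u, ENNReal.ofReal (min (‖u‖ ^ (2 : ℕ)) 1) ∂F ≠ ⊤)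
    (hAF : ∫⁻ u in {u : EuclideanSpace ℝ (Fin n) | 1 < ‖u‖}, ENNReal.ofReal (‖u‖ ^ p) ∂F ≠ ⊤)
    (π : EuclideanSpace ℝ (Fin n)) : Integrable (JJ n p π) F :=
  (BB_int n p ‖π‖ F hFlevy hAF).mono' (JJ_meas n p hp0 π).aestronglyMeasurable
    (Filter.Eventually.of_forall fun u => JJ_bound n p ‖π‖ hp0 hp1 (norm_nonneg _) π u le_rfl)

lemma JJ_cont (n : ℕ) (p : ℝ) (hp0 : 0 < p) (hp1 : p < 1)
    (F : Measure (EuclideanSpace ℝ (Fin n)))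
    (hFlevy : ∫⁻ u, ENNReal.ofReal (min (‖u‖ ^ (2 : ℕ)) 1) ∂F ≠ ⊤)
    (hAF : ∫⁻ u in {u : EuclideanSpace ℝ (Fin n) | 1 < ‖u‖}, ENNReal.ofReal (‖u‖ ^ p) ∂F ≠ ⊤) :
    Continuous (fun π => ∫ u, JJ n p π u ∂F) := by
  rw [continuous_iff_continuousAt]
  intro π₀
  refine continuousAt_of_dominated (bound := BB n p (‖π₀‖ + 1)) ?_ ?_
    (BB_int n p _ F hFlevy hAF) ?_
  · exact Filter.Eventually.of_forall fun π => (JJ_meas n p hp0 π).aestronglyMeasurable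
  · have : ∀ᶠ π in nhds π₀, ‖π‖ < ‖π₀‖ + 1 :=
      continuous_norm.continuousAt.eventually (gt_mem_nhds (by linarith))
    filter_upwards [this] with π hπ
    exact Filter.Eventually.of_forall fun u =>
      JJ_bound n p _ hp0 hp1 (by positivity) π u hπ.le
  · refine Filter.Eventually.of_forall fun u => Continuous.continuousAt ?_
    unfold JJ
    have hi : Continuous (fun π : EuclideanSpace ℝ (Fin n) => ⟪π, u⟫) :=
      continuous_id.inner continuous_const
    have h2 : Continuous (fun π : EuclideanSpace ℝ (Fin n) => (max (1 + ⟪π, u⟫) 0) ^ p) :=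
      ((continuous_const.add hi).max continuous_const).rpow_const fun _ => Or.inr hp0.le
    refine ((continuous_const.mul h2).sub continuous_const).sub ?_
    by_cases h : u ∈ {u : EuclideanSpace ℝ (Fin n) | ‖u‖ ≤ 1}
    · simp only [Set.indicator_of_mem h]; exact hi
    · simp only [Set.indicator_of_notMem h]; exact continuous_const

lemma Phi_cont (n : ℕ) (p : ℝ) (hp0 : 0 < p) (hp1 : p < 1)
    (F : Measure (EuclideanSpace ℝ (Fin n)))
    (hFlevy : ∫⁻ u, ENNReal.ofReal (min (‖u‖ ^ (2 : ℕ)) 1) ∂F ≠ ⊤)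
    (hAF : ∫⁻ u in {u : EuclideanSpace ℝ (Fin n) | 1 < ‖u‖}, ENNReal.ofReal (‖u‖ ^ p) ∂F ≠ ⊤)
    (b : EuclideanSpace ℝ (Fin n))
    (c : EuclideanSpace ℝ (Fin n) →ₗ[ℝ] EuclideanSpace ℝ (Fin n)) :
    Continuous (PhiObj n p F b c) := by
  have hc : Continuous c := c.continuous_of_finiteDimensional
  have h := JJ_cont n p hp0 hp1 F hFlevy hAF
  unfold PhiObj
  exact ((continuous_id.inner continuous_const).add
    (continuous_const.mul (continuous_id.inner hc))).add h

lemma C0_closed (n : ℕ) (F : Measure (EuclideanSpace ℝ (Fin n))) :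
    IsClosed {π : EuclideanSpace ℝ (Fin n) |
      F {u : EuclideanSpace ℝ (Fin n) | 1 + ⟪π, u⟫ < 0} = 0} := by
  apply IsSeqClosed.isClosed
  intro x π hx hlim
  have hU : F (⋃ k, {u : EuclideanSpace ℝ (Fin n) | 1 + ⟪x k, u⟫ < 0}) = 0 :=
    measure_iUnion_null hx
  refine measure_mono_null ?_ hU
  intro u hu
  have ht : Filter.Tendsto (fun k => 1 + ⟪x k, u⟫) Filter.atTop (nhds (1 + ⟪π, u⟫)) :=
    (hlim.inner tendsto_const_nhds).const_add 1
  obtain ⟨k, hk⟩ := (ht.eventually (gt_mem_nhds hu)).exists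
  exact Set.mem_iUnion.2 ⟨k, hk⟩

lemma psd_zero {E : Type*} [NormedAddCommGroup E] [InnerProductSpace ℝ E] (c : E →ₗ[ℝ] E)
    (hcsymm : ∀ x y : E, ⟪c x, y⟫ = ⟪x, c y⟫) (hcpsd : ∀ x : E, 0 ≤ ⟪x, c x⟫)
    (d : E) (hd : ⟪d, c d⟫ = 0) : c d = 0 := by
  have key : ∀ t : ℝ, 0 ≤ 2 * t * ⟪c d, c d⟫ + t ^ 2 * ⟪c d, c (c d)⟫ := by
    intro t
    have h := hcpsd (d + t • c d)
    simp only [map_add, map_smul, inner_add_left, inner_add_right, inner_smul_left,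
      inner_smul_right, hd, ← hcsymm d (c d)] at h
    simp at h
    simp
    linarith
  have hA := hcpsd (c d)
  set A := ⟪c d, c (c d)⟫
  have hs : 0 ≤ ⟪c d, c d⟫ := real_inner_self_nonneg
  by_contra hne
  have hs' : 0 < ⟪c d, c d⟫ := real_inner_self_pos.2 hne
  set s := ⟪c d, c d⟫
  have h := key (-(s / (A + 1)))
  have e : 2 * (-(s / (A + 1))) * s + (-(s / (A + 1))) ^ 2 * A
      = - (s ^ 2 * (A + 2) / (A + 1) ^ 2) := by
    field_simp
    ring
  rw [e] at h
  have : 0 < s ^ 2 * (A + 2) / (A + 1) ^ 2 := by positivity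
  linarith

lemma JJ_mid (n : ℕ) (p : ℝ) (hp0 : 0 < p) (hp1 : p < 1) (x y u : EuclideanSpace ℝ (Fin n))
    (hx : 0 ≤ 1 + ⟪x, u⟫) (hy : 0 ≤ 1 + ⟪y, u⟫) :
    0 ≤ 2 * JJ n p ((1/2 : ℝ) • x + (1/2 : ℝ) • y) u - JJ n p x u - JJ n p y u ∧
    (2 * JJ n p ((1/2 : ℝ) • x + (1/2 : ℝ) • y) u - JJ n p x u - JJ n p y u = 0 →
      ⟪x, u⟫ = ⟪y, u⟫) := by
  have hsc := Real.strictConcaveOn_rpow hp0 hp1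
  have hin : ⟪(1/2 : ℝ) • x + (1/2 : ℝ) • y, u⟫ = 1/2 * ⟪x, u⟫ + 1/2 * ⟪y, u⟫ := by
    rw [inner_add_left, real_inner_smul_left, real_inner_smul_left]
  have hind : 2 * Set.indicator {u : EuclideanSpace ℝ (Fin n) | ‖u‖ ≤ 1}
        (fun u => ⟪(1/2 : ℝ) • x + (1/2 : ℝ) • y, u⟫) u =
      Set.indicator {u : EuclideanSpace ℝ (Fin n) | ‖u‖ ≤ 1} (fun u => ⟪x, u⟫) u +
      Set.indicator {u : EuclideanSpace ℝ (Fin n) | ‖u‖ ≤ 1} (fun u => ⟪y, u⟫) u := by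
    by_cases h : u ∈ {u : EuclideanSpace ℝ (Fin n) | ‖u‖ ≤ 1}
    · simp only [Set.indicator_of_mem h, hin]; ring
    · simp only [Set.indicator_of_notMem h]; ring
  have hm : 1 + ⟪(1/2 : ℝ) • x + (1/2 : ℝ) • y, u⟫ =
      (1/2 : ℝ) • (1 + ⟪x, u⟫) + (1/2 : ℝ) • (1 + ⟪y, u⟫) := by
    rw [hin]; simp only [smul_eq_mul]; ring
  have hm0 : 0 ≤ 1 + ⟪(1/2 : ℝ) • x + (1/2 : ℝ) • y, u⟫ := by rw [hin]; linarith
  have hform : 2 * JJ n p ((1/2 : ℝ) • x + (1/2 : ℝ) • y) u - JJ n p x u - JJ n p y u =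
      p⁻¹ * (2 * ((1/2 : ℝ) • (1 + ⟪x, u⟫) + (1/2 : ℝ) • (1 + ⟪y, u⟫)) ^ p
        - (1 + ⟪x, u⟫) ^ p - (1 + ⟪y, u⟫) ^ p) := by
    unfold JJ
    rw [max_eq_left hx, max_eq_left hy, max_eq_left hm0, ← hm]
    linarith [hind]
  rw [hform]
  constructor
  · have := hsc.concaveOn.2 (Set.mem_Ici.2 hx) (Set.mem_Ici.2 hy) (by norm_num : (0:ℝ) ≤ 1/2)
      (by norm_num : (0:ℝ) ≤ 1/2) (by norm_num)
    simp only [smul_eq_mul] at this ⊢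
    apply mul_nonneg (by positivity)
    linarith
  · intro h
    by_contra hne
    have hne' : 1 + ⟪x, u⟫ ≠ 1 + ⟪y, u⟫ := fun h => hne (by linarith)
    have := hsc.2 (Set.mem_Ici.2 hx) (Set.mem_Ici.2 hy) hne' (by norm_num : (0:ℝ) < 1/2)
      (by norm_num : (0:ℝ) < 1/2) (by norm_num)
    rcases mul_eq_zero.1 h with h | h
    · exact absurd h (by positivity)
    · simp only [smul_eq_mul] at this h
      linarith

/-- Let `p ∈ (0,1)`, `F` a Lévy measure satisfying `(A_F)`, `b ∈ ℝⁿ`, `c`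
symmetric positive semidefinite, and `C` a compact convex set with `0 ∈ C`. Then
(a) `Φ` attains its maximum over `C ∩ C₀`, and
(b) any two maximizers of `Φ` over `C ∩ C₀` differ by an element of the null-investment
set `N`. -/
theorem Phi_attains_max_and_maximizers_unique_mod_N
    (n : ℕ) (hn : 1 ≤ n) (p : ℝ) (hp0 : 0 < p) (hp1 : p < 1)
    (F : Measure (EuclideanSpace ℝ (Fin n)))
    (hF0 : F {(0 : EuclideanSpace ℝ (Fin n))} = 0)
    (hFlevy : ∫⁻ u, ENNReal.ofReal (min (‖u‖ ^ (2 : ℕ)) 1) ∂F ≠ ⊤)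
    (hAF : ∫⁻ u in {u : EuclideanSpace ℝ (Fin n) | 1 < ‖u‖}, ENNReal.ofReal (‖u‖ ^ p) ∂F ≠ ⊤)
    (b : EuclideanSpace ℝ (Fin n))
    (c : EuclideanSpace ℝ (Fin n) →ₗ[ℝ] EuclideanSpace ℝ (Fin n))
    (hcsymm : ∀ x y : EuclideanSpace ℝ (Fin n), ⟪c x, y⟫ = ⟪x, c y⟫)
    (hcpsd : ∀ x : EuclideanSpace ℝ (Fin n), 0 ≤ ⟪x, c x⟫)
    (C : Set (EuclideanSpace ℝ (Fin n)))
    (hCcompact : IsCompact C) (hCco : Convex ℝ C)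
    (h0C : (0 : EuclideanSpace ℝ (Fin n)) ∈ C) :
    (∃ πs : EuclideanSpace ℝ (Fin n), πs ∈ C ∧
      F {u : EuclideanSpace ℝ (Fin n) | 1 + ⟪πs, u⟫ < 0} = 0 ∧
      ∀ π ∈ C, F {u : EuclideanSpace ℝ (Fin n) | 1 + ⟪π, u⟫ < 0} = 0 →
        PhiObj n p F b c π ≤ PhiObj n p F b c πs) ∧
    (∀ π₁ π₂ : EuclideanSpace ℝ (Fin n),
      π₁ ∈ C → F {u : EuclideanSpace ℝ (Fin n) | 1 + ⟪π₁, u⟫ < 0} = 0 →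
      π₂ ∈ C → F {u : EuclideanSpace ℝ (Fin n) | 1 + ⟪π₂, u⟫ < 0} = 0 →
      (∀ π ∈ C, F {u : EuclideanSpace ℝ (Fin n) | 1 + ⟪π, u⟫ < 0} = 0 →
        PhiObj n p F b c π ≤ PhiObj n p F b c π₁) →
      (∀ π ∈ C, F {u : EuclideanSpace ℝ (Fin n) | 1 + ⟪π, u⟫ < 0} = 0 →
        PhiObj n p F b c π ≤ PhiObj n p F b c π₂) →
      (c (π₁ - π₂) = 0 ∧
        F {u : EuclideanSpace ℝ (Fin n) | ⟪π₁ - π₂, u⟫ ≠ 0} = 0 ∧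
        ⟪π₁ - π₂, b⟫ = 0)) := by
  constructor
  · have hK := hCcompact.inter_right (C0_closed n F)
    obtain ⟨πs, ⟨h1, h2⟩, h3⟩ := hK.exists_isMaxOn
      ⟨0, h0C, by simp [not_lt.2 (zero_le_one (α := ℝ))]⟩
      (Phi_cont n p hp0 hp1 F hFlevy hAF b c).continuousOn
    exact ⟨πs, h1, h2, fun π hπ hπ0 => h3 ⟨hπ, hπ0⟩⟩
  · intro x y hxC hx0 hyC hy0 hxm hym
    have hxae : ∀ᵐ u ∂F, 0 ≤ 1 + ⟪x, u⟫ := by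
      rw [ae_iff]; simpa only [not_le] using hx0
    have hyae : ∀ᵐ u ∂F, 0 ≤ 1 + ⟪y, u⟫ := by
      rw [ae_iff]; simpa only [not_le] using hy0
    set m := (1/2 : ℝ) • x + (1/2 : ℝ) • y with hmdef
    have hmC : m ∈ C := hCco hxC hyC (by norm_num) (by norm_num) (by norm_num)
    have hm0 : F {u : EuclideanSpace ℝ (Fin n) | 1 + ⟪m, u⟫ < 0} = 0 := by
      have : ∀ᵐ u ∂F, 0 ≤ 1 + ⟪m, u⟫ := by
        filter_upwards [hxae, hyae] with u h1 h2
        rw [hmdef, inner_add_left, real_inner_smul_left, real_inner_smul_left]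
        linarith
      rw [ae_iff] at this
      simpa only [not_le] using this
    have hPhi : ∀ π, PhiObj n p F b c π =
      ⟪π, b⟫ + ((p - 1) / 2) * ⟪π, c π⟫ + ∫ u, JJ n p π u ∂F := fun π => rfl
    have hJ := JJ_int n p hp0 hp1 F hFlevy hAF
    have hmid : ∀ᵐ u ∂F, 0 ≤ 2 * JJ n p m u - JJ n p x u - JJ n p y u ∧
        (2 * JJ n p m u - JJ n p x u - JJ n p y u = 0 → ⟪x, u⟫ = ⟪y, u⟫) := by
      filter_upwards [hxae, hyae] with u h1 h2
      exact JJ_mid n p hp0 hp1 x y u h1 h2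
    have hDi : Integrable (fun u => 2 * JJ n p m u - JJ n p x u - JJ n p y u) F :=
      (((hJ m).const_mul 2).sub (hJ x)).sub (hJ y)
    have hDnn : 0 ≤ᵐ[F] fun u => 2 * JJ n p m u - JJ n p x u - JJ n p y u := by
      filter_upwards [hmid] with u h using h.1
    have hDval : ∫ u, (2 * JJ n p m u - JJ n p x u - JJ n p y u) ∂F =
        2 * ∫ u, JJ n p m u ∂F - ∫ u, JJ n p x u ∂F - ∫ u, JJ n p y u ∂F := by
      have hi : Integrable (fun u => 2 * JJ n p m u - JJ n p x u) F :=
        ((hJ m).const_mul 2).sub (hJ x)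
      rw [integral_sub hi (hJ y),
        integral_sub ((hJ m).const_mul 2) (hJ x), integral_const_mul]
    have hD0 := integral_nonneg_of_ae hDnn
    have hbm : 2 * ⟪m, b⟫ = ⟪x, b⟫ + ⟪y, b⟫ := by
      rw [hmdef, inner_add_left, real_inner_smul_left, real_inner_smul_left]; ring
    have hq : 2 * ⟪m, c m⟫ = ⟪x, c x⟫ + ⟪y, c y⟫ - 1 / 2 * ⟪x - y, c (x - y)⟫ := by
      rw [hmdef]
      simp only [map_add, map_sub, map_smul, inner_add_left, inner_add_right, inner_sub_left,
        inner_sub_right, real_inner_smul_left, real_inner_smul_right]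
      ring
    have e1 := hxm m hmC hm0
    have e2 := hym m hmC hm0
    have e3 := hxm y hyC hy0
    have e4 := hym x hxC hx0
    rw [hPhi, hPhi] at e1 e2 e3 e4
    have hdd := hcpsd (x - y)
    have hprod : 0 ≤ (1 - p) * ⟪x - y, c (x - y)⟫ := mul_nonneg (by linarith) hdd
    have hq' : (p - 1) / 2 * (2 * ⟪m, c m⟫) =
      (p - 1) / 2 * ⟪x, c x⟫ + (p - 1) / 2 * ⟪y, c y⟫ + 1 / 4 * ((1 - p) * ⟪x - y, c (x - y)⟫) := by
      rw [hq]; ring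
    have hprod0 : (1 - p) * ⟪x - y, c (x - y)⟫ = 0 := by linarith
    have hDint0 : ∫ u, (2 * JJ n p m u - JJ n p x u - JJ n p y u) ∂F = 0 := by linarith
    have hdd0 : ⟪x - y, c (x - y)⟫ = 0 := by
      rcases mul_eq_zero.1 hprod0 with h | h
      · linarith
      · exact h
    have hc0 : c (x - y) = 0 := psd_zero c hcsymm hcpsd _ hdd0
    have hae : ∀ᵐ u ∂F, ⟪x, u⟫ = ⟪y, u⟫ := by
      filter_upwards [hmid, (integral_eq_zero_iff_of_nonneg_ae hDnn hDi).1 hDint0] with u h1 h2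
      exact h1.2 h2
    refine ⟨hc0, ?_, ?_⟩
    · have : ∀ᵐ u ∂F, ⟪x - y, u⟫ = 0 := by
        filter_upwards [hae] with u hu
        rw [inner_sub_left, hu, sub_self]
      exact ae_iff.1 this
    · have hcxy : c x = c y := by rw [map_sub] at hc0; exact sub_eq_zero.1 hc0
      have hqq : ⟪x, c x⟫ = ⟪y, c y⟫ := by
        rw [hcxy, ← hcsymm, hcxy, hcsymm]
      have hII : ∫ u, JJ n p x u ∂F = ∫ u, JJ n p y u ∂F := by
        apply integral_congr_ae
        filter_upwards [hae] with u hu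
        unfold JJ
        simp only [Set.indicator, hu]
      rw [hqq, hII] at e3 e4
      rw [inner_sub_left]
      linarith
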